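/- arXiv:2408.17232 — 2 statements merged into one kernel-verified Lean document; each statement's English description precedes it below -/
import Mathlib

section
/- For all integers n ≥ k ≥ 1, one has (k+2) · R_{n,k} = C_{n+1,k+1,0}; that is, the number of bubbles of size zero amongst all crystallized diagrams on n+1 chords with exactly k+1 short chords equals k+2 times the number of crystallized diagrams on n chords with exactly k short chords. -/
/-!
In a crystallized diagram with an empty gap, delete the short chord bordering the gap on its right
(on its left, if the gap is the right end of the diagram). Conversely, an empty gap is opened by
inserting a short chord at the left end of a diagram, at its right end, or just after one of its
`k` short chords, which makes `k + 2` choices.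

Both operations preserve being crystallized, because this property means that every chord has an
endpoint of a short chord weakly between its two endpoints: if an old chord needs the inserted one
for this, it passes over the slot, which is then not at an end, and hence also covers a vertex of
the short chord just before the slot.
-/

namespace ChordBubbles

/-- A linear chord diagram with `n` chords: a fixed-point-free involution of `Fin (2*n)`. -/
def IsDiagram (n : ℕ) (f : Equiv.Perm (Fin (2 * n))) : Prop :=
  (∀ i, f (f i) = i) ∧ ∀ i, f i ≠ i

/-- Vertex `i` is an endpoint of a short chord (a chord joining adjacent vertices). -/
def ShortEnd (n : ℕ) (f : Equiv.Perm (Fin (2 * n))) (i : Fin (2 * n)) : Prop :=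
  (f i).val = i.val + 1 ∨ (f i).val + 1 = i.val

/-- `[a, b]` delimits a bubble: a maximal nonempty interval of vertices none of which is an
endpoint of a short chord. -/
def IsBubble (n : ℕ) (f : Equiv.Perm (Fin (2 * n))) (a b : ℕ) : Prop :=
  a ≤ b ∧ b < 2 * n ∧
  (∀ i : Fin (2 * n), a ≤ i.val → i.val ≤ b → ¬ ShortEnd n f i) ∧
  (a = 0 ∨ ∃ j : Fin (2 * n), j.val + 1 = a ∧ ShortEnd n f j) ∧
  (b + 1 = 2 * n ∨ ∃ j : Fin (2 * n), j.val = b + 1 ∧ ShortEnd n f j)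

/-- The size (number of vertices) of the bubble `[a, b]`. -/
def bubbleSize (a b : ℕ) : ℕ := b + 1 - a

/-- The number of bridges of the bubble `[a, b]` under the diagram `f`: the number of chords
joining a vertex inside the bubble to one outside it. -/
noncomputable def bridges (n : ℕ) (f : Equiv.Perm (Fin (2 * n))) (a b : ℕ) : ℕ :=
  Nat.card {i : Fin (2 * n) // (a ≤ i.val ∧ i.val ≤ b) ∧ ¬ (a ≤ (f i).val ∧ (f i).val ≤ b)}

/-- `N n q b` : the number of pairs (diagram, bubble) where the diagram has `n` chords and the
bubble has size `q` and exactly `b` bridges. -/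
noncomputable def N (n q b : ℕ) : ℕ :=
  Nat.card {p : Equiv.Perm (Fin (2 * n)) × ℕ × ℕ //
    IsDiagram n p.1 ∧ IsBubble n p.1 p.2.1 p.2.2 ∧
    bubbleSize p.2.1 p.2.2 = q ∧ bridges n p.1 p.2.1 p.2.2 = b}

/-- A diagram is crystallized when all its bubbles are empty, i.e., no chord joins two vertices
lying in the same bubble. -/
def Crystallized (n : ℕ) (f : Equiv.Perm (Fin (2 * n))) : Prop :=
  ∀ a b, IsBubble n f a b → ∀ i : Fin (2 * n),
    a ≤ i.val → i.val ≤ b → ¬ (a ≤ (f i).val ∧ (f i).val ≤ b)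

/-- The number of short chords of a diagram. -/
noncomputable def shortChords (n : ℕ) (f : Equiv.Perm (Fin (2 * n))) : ℕ :=
  Nat.card {i : Fin (2 * n) // (f i).val = i.val + 1}

/-- `R n k` : the number of crystallized diagrams with `n` chords, exactly `k` of them short. -/
noncomputable def R (n k : ℕ) : ℕ :=
  Nat.card {f : Equiv.Perm (Fin (2 * n)) //
    IsDiagram n f ∧ Crystallized n f ∧ shortChords n f = k}

/-- A bubble of size 0: a cut position `a` with no vertices between its two delimiters, each of
which is either an end of the diagram or a short chord (a short chord ending at `a-1` on the
left, a short chord starting at `a` on the right). -/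
def IsGap (n : ℕ) (f : Equiv.Perm (Fin (2 * n))) (a : ℕ) : Prop :=
  a ≤ 2 * n ∧
  (a = 0 ∨ ∃ j : Fin (2 * n), j.val + 1 = a ∧ (f j).val + 1 = j.val) ∧
  (a = 2 * n ∨ ∃ j : Fin (2 * n), j.val = a ∧ (f j).val = j.val + 1)

/-- `C n k q` : the number of pairs (diagram, bubble of size `q`) where the diagram is a
crystallized diagram with `n` chords, exactly `k` of them short.  For `q = 0` the bubbles are
the empty gaps between consecutive short chords or between an end of the diagram and the
nearest short chord. -/
noncomputable def C (n k q : ℕ) : ℕ :=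
  if q = 0 then
    Nat.card {p : Equiv.Perm (Fin (2 * n)) × ℕ //
      IsDiagram n p.1 ∧ Crystallized n p.1 ∧ shortChords n p.1 = k ∧ IsGap n p.1 p.2}
  else
    Nat.card {p : Equiv.Perm (Fin (2 * n)) × ℕ × ℕ //
      IsDiagram n p.1 ∧ Crystallized n p.1 ∧ shortChords n p.1 = k ∧
      IsBubble n p.1 p.2.1 p.2.2 ∧ bubbleSize p.2.1 p.2.2 = q}

lemma ncard_setOf_fst_mem_and {α β : Type*} {s : Set α} {r : α → β → Prop} {c : ℕ}
    (hc : c ≠ 0) (hs : ∀ a ∈ s, {b | r a b}.ncard = c) :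
    {x : α × β | x.1 ∈ s ∧ r x.1 x.2}.ncard = c * s.ncard := by
  have fiberEquiv (a : s) : {b // r a b} ≃ Fin c :=
    (Nat.equivFinOfCardPos ((hs a a.2).trans_ne hc)).trans (finCongr (hs a a.2))
  have e : {x : α × β // x.1 ∈ s ∧ r x.1 x.2} ≃ s × Fin c :=
    calc {x : α × β // x.1 ∈ s ∧ r x.1 x.2}
      _ ≃ Σ a : s, {b // r a b} :=
        { toFun := fun x => ⟨⟨x.1.1, x.2.1⟩, ⟨x.1.2, x.2.2⟩⟩
          invFun := fun y => ⟨(y.1.1, y.2.1), y.1.2, y.2.2⟩ }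
      _ ≃ Σ _ : s, Fin c := Equiv.sigmaCongrRight fiberEquiv
      _ ≃ s × Fin c := Equiv.sigmaEquivProd s (Fin c)
  rw [← Nat.card_coe_set_eq, ← Nat.card_coe_set_eq, mul_comm, ← Nat.card_fin c]
  exact (Nat.card_congr e).trans (by rw [Nat.card_prod, Nat.card_fin])

variable {n : ℕ} {f : Equiv.Perm (Fin (2 * n))}

/-- `i` is the left endpoint of a short chord, which it then determines. -/
def StartsShort (n : ℕ) (f : Equiv.Perm (Fin (2 * n))) (i : Fin (2 * n)) : Prop :=
  (f i).val = i.val + 1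

lemma shortEnd_iff (hf : IsDiagram n f) (i : Fin (2 * n)) :
    ShortEnd n f i ↔ StartsShort n f i ∨ StartsShort n f (f i) := by
  simp only [ShortEnd, StartsShort, hf.1, eq_comm]

lemma isGap_iff (hf : IsDiagram n f) {g : ℕ} :
    IsGap n f g ↔ (g = 0 ∨ ∃ i, StartsShort n f i ∧ i.val + 2 = g) ∧
      (g = 2 * n ∨ ∃ i, StartsShort n f i ∧ i.val = g) := by
  simp only [IsGap, StartsShort]
  constructor
  · rintro ⟨-, hleft, hright⟩
    refine ⟨hleft.imp_right fun ⟨j, hj, hfj⟩ => ⟨f j, ?_, ?_⟩,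
      hright.imp_right fun ⟨i, hi, hfi⟩ => ⟨i, hfi, hi⟩⟩
    · rw [hf.1, hfj]
    · omega
  · rintro ⟨hleft, hright⟩
    refine ⟨?_, hleft.imp_right fun ⟨i, hi, hig⟩ => ⟨f i, ?_, ?_⟩,
      hright.imp_right fun ⟨i, hfi, hi⟩ => ⟨i, hi, hfi⟩⟩
    · rcases hright with hg | ⟨i, -, hi⟩ <;> omega
    · omega
    · rw [hf.1, hi]

lemma exists_isBubble_superset {i j : ℕ} (hij : i ≤ j) (hj : j < 2 * n)
    (h : ∀ v : Fin (2 * n), i ≤ v.val → v.val ≤ j → ¬ ShortEnd n f v) :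
    ∃ a b, IsBubble n f a b ∧ a ≤ i ∧ j ≤ b := by
  classical
  let IsLeftEnd (a : ℕ) : Prop := a = 0 ∨ ∃ v : Fin (2 * n), v.val + 1 = a ∧ ShortEnd n f v
  let IsRightEnd (b : ℕ) : Prop :=
    j ≤ b ∧ (b + 1 = 2 * n ∨ ∃ v : Fin (2 * n), v.val = b + 1 ∧ ShortEnd n f v)
  have hright : ∃ b, IsRightEnd b := ⟨2 * n - 1, by omega, Or.inl (by omega)⟩
  have ha : Nat.findGreatest IsLeftEnd i ≤ i := Nat.findGreatest_le i
  have hleft : IsLeftEnd (Nat.findGreatest IsLeftEnd i) :=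
    Nat.findGreatest_spec (Nat.zero_le i) (Or.inl rfl)
  obtain ⟨hb, hb_end⟩ := Nat.find_spec hright
  have hb_lt : Nat.find hright < 2 * n := by
    rcases hb_end with hb_end | ⟨v, hv, -⟩ <;> omega
  refine ⟨Nat.findGreatest IsLeftEnd i, Nat.find hright,
    ⟨by omega, hb_lt, ?_, hleft, hb_end⟩, ha, hb⟩
  intro v hav hvb hv
  rcases lt_or_ge v.val i with hvi | hiv
  · have := Nat.le_findGreatest (P := IsLeftEnd) hvi (Or.inr ⟨v, rfl, hv⟩)
    omega
  · have hjv : j < v.val := not_le.1 fun hvj => h v hiv hvj hv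
    exact Nat.find_min hright (m := v.val - 1) (by omega) ⟨by omega, Or.inr ⟨v, by omega, hv⟩⟩

lemma crystallized_iff_exists_shortEnd_mem_uIcc :
    Crystallized n f ↔ ∀ i, ∃ v ∈ Set.uIcc i (f i), ShortEnd n f v := by
  simp only [Set.mem_uIcc, Fin.le_def]
  constructor
  · intro hf i
    by_contra! hno
    obtain ⟨a, b, hab, ha, hb⟩ := exists_isBubble_superset (f := f)
      (i := min i.val (f i).val) (j := max i.val (f i).val) (by omega) (by omega)
      fun v h₁ h₂ => hno v (by omega)
    exact hf a b hab i (by omega) (by omega) ⟨by omega, by omega⟩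
  · rintro h a b hab i hai hib ⟨haf, hfb⟩
    obtain ⟨v, hv, hshort⟩ := h i
    exact hab.2.2.1 v (by omega) (by omega) hshort

/-- The relabelling of the old vertices when two new vertices are inserted at positions `p` and
`p + 1`. -/
def skip (p : Fin (2 * n + 1)) : Fin (2 * n) ↪o Fin (2 * (n + 1)) :=
  OrderEmbedding.ofStrictMono
    (fun i => ⟨if i.val < p.val then i.val else i.val + 2, by split_ifs <;> omega⟩)
    fun i j hij => by
      simp only [Fin.lt_def] at hij ⊢
      split_ifs <;> omega

/-- The two vertices `p` and `p + 1` missed by `skip p`. -/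
def fresh (p : Fin (2 * n + 1)) (b : Fin 2) : Fin (2 * (n + 1)) :=
  ⟨p.val + b.val, by omega⟩

variable {p : Fin (2 * n + 1)}

lemma val_skip (i : Fin (2 * n)) :
    (skip p i).val = if i.val < p.val then i.val else i.val + 2 := rfl

lemma val_fresh (b : Fin 2) : (fresh p b).val = p.val + b.val := rfl

lemma fresh_injective (p : Fin (2 * n + 1)) : Function.Injective (fresh p) := fun b c h => by
  simp only [Fin.ext_iff, val_fresh] at h ⊢
  omega

lemma skip_ne_fresh (i : Fin (2 * n)) (b : Fin 2) : skip p i ≠ fresh p b := fun h => by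
  simp only [Fin.ext_iff, val_skip, val_fresh] at h
  split_ifs at h <;> omega

lemma bijective_sumElim_skip_fresh (p : Fin (2 * n + 1)) :
    Function.Bijective (Sum.elim (skip p) (fresh p)) := by
  refine (Fintype.bijective_iff_injective_and_card _).2 ⟨?_, by simp [mul_add]⟩
  exact (skip p).injective.sumElim (fresh_injective p) skip_ne_fresh

/-- The vertices of the larger diagram, split into the old and the new ones. -/
noncomputable def vertexEquiv (p : Fin (2 * n + 1)) :
    Fin (2 * n) ⊕ Fin 2 ≃ Fin (2 * (n + 1)) :=
  Equiv.ofBijective _ (bijective_sumElim_skip_fresh p)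

lemma vertexEquiv_inl (i : Fin (2 * n)) : vertexEquiv p (Sum.inl i) = skip p i := rfl

lemma vertexEquiv_inr (b : Fin 2) : vertexEquiv p (Sum.inr b) = fresh p b := rfl

lemma forall_vertex_iff (p : Fin (2 * n + 1)) {P : Fin (2 * (n + 1)) → Prop} :
    (∀ v, P v) ↔ (∀ i, P (skip p i)) ∧ ∀ b, P (fresh p b) :=
  (vertexEquiv p).forall_congr_right.symm.trans Sum.forall

lemma exists_vertex_iff (p : Fin (2 * n + 1)) {P : Fin (2 * (n + 1)) → Prop} :
    (∃ v, P v) ↔ (∃ i, P (skip p i)) ∨ ∃ b, P (fresh p b) :=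
  (vertexEquiv p).exists_congr_right.symm.trans Sum.exists

/-- The diagram obtained from `f` by inserting a short chord at the positions `p` and `p + 1`. -/
noncomputable def insertShort (p : Fin (2 * n + 1)) (f : Equiv.Perm (Fin (2 * n))) :
    Equiv.Perm (Fin (2 * (n + 1))) :=
  (vertexEquiv p).permCongr (Equiv.Perm.sumCongr f (Equiv.swap 0 1))

lemma insertShort_skip (i : Fin (2 * n)) : insertShort p f (skip p i) = skip p (f i) := by
  simp [insertShort, ← vertexEquiv_inl, Equiv.permCongr_apply]

lemma insertShort_fresh (b : Fin 2) :
    insertShort p f (fresh p b) = fresh p (Equiv.swap 0 1 b) := by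
  simp [insertShort, ← vertexEquiv_inr, Equiv.permCongr_apply]

lemma insertShort_injective (p : Fin (2 * n + 1)) : Function.Injective (insertShort p) := by
  intro f g h
  ext i
  have := DFunLike.congr_fun h (skip p i)
  rw [insertShort_skip, insertShort_skip] at this
  exact congrArg Fin.val ((skip p).injective this)

lemma isDiagram_insertShort_iff : IsDiagram (n + 1) (insertShort p f) ↔ IsDiagram n f := by
  have hswap (b : Fin 2) : Equiv.swap 0 1 b ≠ b := by decide +revert
  simp [IsDiagram, forall_vertex_iff p, insertShort_skip, insertShort_fresh,
    (fresh_injective p).ne_iff, hswap]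

lemma exists_insertShort_eq {F : Equiv.Perm (Fin (2 * (n + 1)))} (hF : IsDiagram (n + 1) F)
    (hp : StartsShort (n + 1) F (fresh p 0)) : ∃ f, insertShort p f = F := by
  replace hp : F (fresh p 0) = fresh p 1 := Fin.ext hp
  have hp' : F (fresh p 1) = fresh p 0 := by rw [← hp, hF.1]
  have hfresh (b : Fin 2) : F (fresh p b) = fresh p (Equiv.swap 0 1 b) := by
    fin_cases b <;> simpa
  have hskip (i : Fin (2 * n)) : ∃ j, F (skip p i) = skip p j := by
    rcases (exists_vertex_iff p).1 ⟨F (skip p i), rfl⟩ with hj | ⟨b, hb⟩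
    · exact hj
    · refine absurd ?_ (skip_ne_fresh (p := p) i (Equiv.swap 0 1 b))
      rw [← hfresh, ← hb, hF.1]
  choose f hf using hskip
  have hinv : Function.Involutive f := fun i => (skip p).injective (by rw [← hf, ← hf, hF.1])
  refine ⟨hinv.toPerm f, Equiv.ext ((forall_vertex_iff p).2 ⟨fun i => ?_, fun b => ?_⟩)⟩
  · rw [insertShort_skip, hf, hinv.coe_toPerm]
  · rw [insertShort_fresh, hfresh]

lemma startsShort_insertShort_fresh_iff (b : Fin 2) :
    StartsShort (n + 1) (insertShort p f) (fresh p b) ↔ b = 0 := by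
  rw [StartsShort, insertShort_fresh, val_fresh, val_fresh]
  fin_cases b <;> simp [add_assoc]

lemma shortEnd_insertShort_fresh (b : Fin 2) :
    ShortEnd (n + 1) (insertShort p f) (fresh p b) := by
  rw [ShortEnd, insertShort_fresh, val_fresh, val_fresh]
  fin_cases b <;> simp

/-- A short chord of `f` has its endpoints on the two sides of the cut `p`, so that inserting
vertices there makes it long. -/
def Splits (p : Fin (2 * n + 1)) (f : Equiv.Perm (Fin (2 * n))) : Prop :=
  ∃ i, StartsShort n f i ∧ (f i).val = p.val

lemma startsShort_insertShort_skip_iff (hp : ¬ Splits p f) (i : Fin (2 * n)) :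
    StartsShort (n + 1) (insertShort p f) (skip p i) ↔ StartsShort n f i := by
  have hi : (f i).val = i.val + 1 → (f i).val ≠ p.val := fun h h' => hp ⟨i, h, h'⟩
  rw [StartsShort, insertShort_skip, val_skip, val_skip, StartsShort]
  split_ifs <;> omega

lemma shortEnd_insertShort_skip_iff (hf : IsDiagram n f) (hp : ¬ Splits p f) (i : Fin (2 * n)) :
    ShortEnd (n + 1) (insertShort p f) (skip p i) ↔ ShortEnd n f i := by
  rw [shortEnd_iff (isDiagram_insertShort_iff.2 hf), shortEnd_iff hf, insertShort_skip,
    startsShort_insertShort_skip_iff hp, startsShort_insertShort_skip_iff hp]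

lemma shortChords_insertShort (hp : ¬ Splits p f) :
    shortChords (n + 1) (insertShort p f) = shortChords n f + 1 := by
  let S := StartsShort (n + 1) (insertShort p f)
  calc Nat.card {v // S v}
      = Nat.card {x // S (vertexEquiv p x)} :=
        (Nat.card_congr ((vertexEquiv p).subtypeEquiv fun _ => Iff.rfl)).symm
    _ = Nat.card {i // S (skip p i)} + Nat.card {b // S (fresh p b)} := by
        rw [Nat.card_congr Equiv.subtypeSum, Nat.card_sum]
        rfl
    _ = shortChords n f + 1 := by
        simp only [S, startsShort_insertShort_skip_iff hp, startsShort_insertShort_fresh_iff,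
          Nat.card_unique]
        rfl

/-- The positions at which an empty gap can be opened by inserting a short chord: the left end,
the position just after each short chord, and the right end. Slots are named by the position of
the resulting gap in the larger diagram, so that the right end is `2 * n + 2` and is distinct from
the slot `2 * n` after a short chord ending at the last vertex. -/
def IsSlot (n : ℕ) (f : Equiv.Perm (Fin (2 * n))) (g : ℕ) : Prop :=
  g = 0 ∨ g = 2 * n + 2 ∨ ∃ i, StartsShort n f i ∧ i.val + 2 = g

/-- The place where a short chord is inserted to open the gap `g`: to the right of the gap, or to
its left if the gap is the right end `2 * n + 2` of the larger diagram. -/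
def cut (n g : ℕ) : Fin (2 * n + 1) :=
  ⟨min g (2 * n), by omega⟩

lemma val_cut (n g : ℕ) : (cut n g).val = min g (2 * n) := rfl

variable {g : ℕ}

lemma IsSlot.not_splits (hf : IsDiagram n f) (hg : IsSlot n f g) : ¬ Splits (cut n g) f := by
  rintro ⟨v, hv, hvg⟩
  rw [StartsShort] at hv
  rw [val_cut] at hvg
  rcases hg with rfl | rfl | ⟨i, hi, rfl⟩
  · omega
  · omega
  · rw [StartsShort] at hi
    obtain rfl : v = f i := by omega
    rw [hf.1] at hv
    omega

lemma ncard_setOf_isSlot (n : ℕ) (f : Equiv.Perm (Fin (2 * n))) :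
    {g | IsSlot n f g}.ncard = shortChords n f + 2 := by
  have hslot : {g | IsSlot n f g} =
      insert 0 (insert (2 * n + 2) ((fun i => i.val + 2) '' {i | StartsShort n f i})) := rfl
  have hinj : Function.Injective fun i : Fin (2 * n) => i.val + 2 := fun i j h => by
    simpa [Fin.ext_iff] using h
  rw [hslot, Set.ncard_insert_of_notMem (by simp), Set.ncard_insert_of_notMem,
    Set.ncard_image_of_injective _ hinj]
  · rfl
  · rintro ⟨i, -, hi⟩
    exact (Nat.add_right_cancel hi).not_lt i.isLt

lemma IsSlot.val_cut_eq_or_exists_shortEnd (hf : IsDiagram n f) (hg : IsSlot n f g) :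
    (cut n g).val = 0 ∨ (cut n g).val = 2 * n ∨
      ∃ v : Fin (2 * n), v.val + 1 = (cut n g).val ∧ ShortEnd n f v := by
  rw [val_cut]
  rcases hg with rfl | rfl | ⟨i, hi, rfl⟩
  · left; omega
  · right; left; omega
  · refine Or.inr (Or.inr ⟨f i, ?_, (shortEnd_iff hf _).2 (Or.inr ?_)⟩)
    · rw [StartsShort] at hi
      omega
    · rwa [hf.1]

lemma skip_mem_uIcc_iff {i j k : Fin (2 * n)} :
    skip p k ∈ Set.uIcc (skip p i) (skip p j) ↔ k ∈ Set.uIcc i j := by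
  simp only [Set.mem_uIcc, (skip p).le_iff_le]

lemma fresh_mem_uIcc_iff {i j : Fin (2 * n)} {b : Fin 2} :
    fresh p b ∈ Set.uIcc (skip p i) (skip p j) ↔
      min i.val j.val < p.val ∧ p.val ≤ max i.val j.val := by
  simp only [Set.mem_uIcc, Fin.le_def, val_skip, val_fresh]
  split_ifs <;> omega

lemma crystallized_insertShort_iff (hf : IsDiagram n f) (hg : IsSlot n f g) :
    Crystallized (n + 1) (insertShort (cut n g) f) ↔ Crystallized n f := by
  simp only [crystallized_iff_exists_shortEnd_mem_uIcc, forall_vertex_iff (cut n g),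
    exists_vertex_iff (cut n g), insertShort_skip, skip_mem_uIcc_iff, fresh_mem_uIcc_iff,
    shortEnd_insertShort_skip_iff hf (hg.not_splits hf)]
  constructor
  · rintro ⟨h, -⟩ i
    rcases h i with hv | ⟨-, ⟨hlt, hle⟩, -⟩
    · exact hv
    · rcases hg.val_cut_eq_or_exists_shortEnd hf with h₀ | h₁ | ⟨v, hv, hshort⟩
      · omega
      · omega
      · refine ⟨v, ?_, hshort⟩
        simp only [Set.mem_uIcc, Fin.le_def]
        omega
  · exact fun h => ⟨fun i => Or.inl (h i), fun b =>
      Or.inr ⟨b, Set.left_mem_uIcc, shortEnd_insertShort_fresh b⟩⟩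

lemma isGap_insertShort_iff (hf : IsDiagram n f) :
    IsGap (n + 1) (insertShort (cut n g) f) g ↔ IsSlot n f g := by
  rw [isGap_iff (isDiagram_insertShort_iff.2 hf), exists_vertex_iff (cut n g)]
  constructor
  · rintro ⟨hleft, hg | ⟨w, hw, hwg⟩⟩
    · exact Or.inr (Or.inl hg)
    have hcut : (cut n g).val = g := by
      have := (insertShort (cut n g) f w).isLt
      rw [StartsShort] at hw
      rw [val_cut]
      omega
    rcases hleft with hg | ⟨i, hi, hig⟩ | ⟨b, -, hbg⟩
    · exact Or.inl hg
    · simp only [StartsShort, insertShort_skip, val_skip, hcut] at hi hig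
      refine Or.inr (Or.inr ⟨i, ?_, ?_⟩)
      · rw [StartsShort]
        split_ifs at hi hig <;> omega
      · split_ifs at hig <;> omega
    · rw [val_fresh, hcut] at hbg
      omega
  · intro hg
    have hstart : StartsShort (n + 1) (insertShort (cut n g) f) (fresh (cut n g) 0) :=
      (startsShort_insertShort_fresh_iff 0).2 rfl
    rcases hg with rfl | rfl | ⟨i, hi, rfl⟩
    · exact ⟨Or.inl rfl, Or.inr ⟨_, hstart, by simp [val_fresh, val_cut]⟩⟩
    · exact ⟨Or.inr (Or.inr ⟨0, hstart, by simp [val_fresh, val_cut]⟩), Or.inl rfl⟩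
    · have hsplit := IsSlot.not_splits hf (Or.inr (Or.inr ⟨i, hi, rfl⟩))
      have hle : i.val + 2 ≤ 2 * n := by
        rw [StartsShort] at hi
        omega
      refine ⟨Or.inr (Or.inl ⟨i, (startsShort_insertShort_skip_iff hsplit i).2 hi, ?_⟩),
        Or.inr ⟨_, hstart, ?_⟩⟩
      · simp [val_skip, val_cut, hle]
      · simp [val_fresh, val_cut, hle]

lemma IsGap.startsShort_fresh_cut {F : Equiv.Perm (Fin (2 * (n + 1)))}
    (hF : IsDiagram (n + 1) F) (hg : IsGap (n + 1) F g) :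
    StartsShort (n + 1) F (fresh (cut n g) 0) := by
  obtain ⟨hleft, hright⟩ := (isGap_iff hF).1 hg
  obtain ⟨v, hv, hvg⟩ : ∃ v, StartsShort (n + 1) F v ∧ v.val = min g (2 * n) := by
    rcases hright with rfl | ⟨v, hv, rfl⟩
    · obtain ⟨v, hv, hvg⟩ := hleft.resolve_left (by omega)
      exact ⟨v, hv, by omega⟩
    · refine ⟨v, hv, ?_⟩
      rw [StartsShort] at hv
      omega
  rwa [← show v = fresh (cut n g) 0 from Fin.ext hvg]

/-- The diagrams counted by `R n k`. -/
def crystallizedDiagrams (n k : ℕ) : Set (Equiv.Perm (Fin (2 * n))) :=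
  {f | IsDiagram n f ∧ Crystallized n f ∧ shortChords n f = k}

/-- The pairs counted by `C n k 0`. -/
def gapPairs (n k : ℕ) : Set (Equiv.Perm (Fin (2 * n)) × ℕ) :=
  {x | x.1 ∈ crystallizedDiagrams n k ∧ IsGap n x.1 x.2}

lemma R_eq_ncard (n k : ℕ) : R n k = (crystallizedDiagrams n k).ncard := rfl

lemma C_zero_eq_ncard (n k : ℕ) : C n k 0 = (gapPairs n k).ncard := by
  simp only [C, gapPairs, crystallizedDiagrams, Set.mem_ofPred_eq, and_assoc, if_true]
  rfl

/-- The pairs of a diagram counted by `R n k` and one of its slots. -/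
def slotPairs (n k : ℕ) : Set (Equiv.Perm (Fin (2 * n)) × ℕ) :=
  {x | x.1 ∈ crystallizedDiagrams n k ∧ IsSlot n x.1 x.2}

lemma ncard_slotPairs (n k : ℕ) : (slotPairs n k).ncard = (k + 2) * R n k := by
  rw [R_eq_ncard]
  exact ncard_setOf_fst_mem_and (by omega) fun f hf => by rw [ncard_setOf_isSlot, hf.2.2]

/-- The insertion of a short chord at a slot, remembering where the gap it opens is. -/
noncomputable def openGap (x : Equiv.Perm (Fin (2 * n)) × ℕ) : Equiv.Perm (Fin (2 * (n + 1))) × ℕ :=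
  (insertShort (cut n x.2) x.1, x.2)

lemma openGap_injective (n : ℕ) : Function.Injective (openGap (n := n)) := by
  rintro ⟨f, g⟩ ⟨f', g'⟩ h
  obtain ⟨hf, rfl⟩ := Prod.mk.inj h
  exact congrArg (·, g) (insertShort_injective _ hf)

lemma openGap_mem_gapPairs_iff {k : ℕ} (x : Equiv.Perm (Fin (2 * n)) × ℕ) :
    openGap x ∈ gapPairs (n + 1) (k + 1) ↔ x ∈ slotPairs n k := by
  obtain ⟨f, g⟩ := x
  simp only [openGap, gapPairs, slotPairs, crystallizedDiagrams, Set.mem_ofPred_eq, and_assoc,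
    isDiagram_insertShort_iff]
  refine and_congr_right fun hf => ?_
  rw [isGap_insertShort_iff hf]
  constructor
  · rintro ⟨hc, hk, hg⟩
    rw [crystallized_insertShort_iff hf hg] at hc
    rw [shortChords_insertShort (hg.not_splits hf)] at hk
    exact ⟨hc, by omega, hg⟩
  · rintro ⟨hc, hk, hg⟩
    rw [crystallized_insertShort_iff hf hg, shortChords_insertShort (hg.not_splits hf)]
    exact ⟨hc, by omega, hg⟩

lemma gapPairs_subset_range_openGap (n k : ℕ) :
    gapPairs (n + 1) k ⊆ Set.range (openGap (n := n)) := by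
  rintro ⟨F, g⟩ ⟨⟨hF, -⟩, hg⟩
  obtain ⟨f, hf⟩ := exists_insertShort_eq hF (hg.startsShort_fresh_cut hF)
  exact ⟨(f, g), congrArg (·, g) hf⟩

/-- The number of bubbles of size zero amongst all crystallized diagrams on `n+1` chords with
exactly `k+1` short chords equals `k+2` times the number of crystallized diagrams on `n` chords
with exactly `k` short chords. -/
theorem R_eq_C_zero (n k : ℕ) (hk : 1 ≤ k) (hn : k ≤ n) :
    (k + 2) * R n k = C (n + 1) (k + 1) 0 := by
  calc (k + 2) * R n k
      = (slotPairs n k).ncard := (ncard_slotPairs n k).symm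
    _ = (openGap ⁻¹' gapPairs (n + 1) (k + 1)).ncard :=
        congrArg Set.ncard (Set.ext fun x => (openGap_mem_gapPairs_iff x).symm)
    _ = (gapPairs (n + 1) (k + 1)).ncard :=
        Set.ncard_preimage_of_injective_subset_range (openGap_injective n)
          (gapPairs_subset_range_openGap n (k + 1))
    _ = C (n + 1) (k + 1) 0 := (C_zero_eq_ncard (n + 1) (k + 1)).symm

end ChordBubbles
end

section
/- For every integer k ≥ 1, with M = (k−2)·I_E − L over ℚ and j_E the all-ones E×1 vector, one has (j_Eᵀ·M⁻¹·j_E) · det M = (k+1)·k^{k(k−1)/2} / 2. -/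
open Matrix Polynomial

namespace ChordBubbles

/-- The edge set of the complete graph on `m` vertices. -/
def Edge (m : ℕ) := {e : Sym2 (Fin m) // ¬ e.IsDiag}

instance (m : ℕ) : Fintype (Edge m) := Subtype.fintype _
instance (m : ℕ) : DecidableEq (Edge m) := Subtype.instDecidableEq

/-- The incidence matrix of the complete graph `K_{k+1}` over `ℚ`: rows indexed by vertices,
columns by edges, with entry 1 exactly when the vertex is an endpoint of the edge. -/
def Bmat (k : ℕ) : Matrix (Fin (k + 1)) (Edge (k + 1)) ℚ :=
  Matrix.of fun v e => if v ∈ e.val then 1 else 0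

/-- The adjacency matrix of the line graph of `K_{k+1}`: `L = Bᵀ·B - 2·I`. -/
def Lmat (k : ℕ) : Matrix (Edge (k + 1)) (Edge (k + 1)) ℚ :=
  (Bmat k)ᵀ * Bmat k - 2 • 1

/-- The matrix `M = (k-2)·I - L`. -/
noncomputable def Mmat (k : ℕ) : Matrix (Edge (k + 1)) (Edge (k + 1)) ℚ :=
  ((k : ℚ) - 2) • 1 - Lmat k

/-!
Since `M = k·I - Bᵀ·B`, its determinant is governed by the much smaller Gram matrix `B·Bᵀ`:
`k^(k+1) · det (k·I_E - Bᵀ·B) = k^E · det (k·I - B·Bᵀ)`. Two distinct vertices of `K_{k+1}` share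
exactly one edge and each vertex lies on `k` of them, so `B·Bᵀ = (k-1)·I + J`, and the right-hand
determinant is `det (I - J) = 1 - (k+1)`; this gives `det M = -k^(k(k-1)/2)`. Moreover every
row of `M` sums to `k - 2k = -k`, so `M⁻¹` maps the all-ones vector to `-1/k` times itself,
and its `k(k+1)/2` row sums add up to `-(k+1)/2`.
-/

section Matrices

variable {m n R : Type*} [Fintype m] [DecidableEq m] [Fintype n] [DecidableEq n] [CommRing R]

theorem pow_card_mul_det_smul_one_sub_mul_comm (A : Matrix m n R) (B : Matrix n m R) (c : R) :
    c ^ Fintype.card n * (c • 1 - A * B).det = c ^ Fintype.card m * (c • 1 - B * A).det := by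
  simpa only [eval_mul, eval_pow, eval_X, eval_charpoly, scalar_apply, ← smul_one_eq_diagonal]
    using congrArg (eval c) (charpoly_mul_comm' A B)

theorem det_one_sub_vecMulVec (u v : n → R) : (1 - vecMulVec u v).det = 1 - v ⬝ᵥ u := by
  rw [sub_eq_add_neg, ← neg_vecMulVec, vecMulVec_eq Unit, det_one_add_replicateCol_mul_replicateRow,
    dotProduct_neg, ← sub_eq_add_neg]

theorem mul_sum_inv_of_mulVec_one {A : Matrix n n R} (hA : IsUnit A.det) {c : R}
    (h : A *ᵥ 1 = c • 1) : c * ∑ i, ∑ j, A⁻¹ i j = Fintype.card n := by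
  have inv_mulVec : c • (A⁻¹ *ᵥ 1) = 1 := by
    rw [← mulVec_smul, ← h, mulVec_mulVec, nonsing_inv_mul A hA, one_mulVec]
  calc c * ∑ i, ∑ j, A⁻¹ i j = 1 ⬝ᵥ (c • (A⁻¹ *ᵥ 1)) := by
        simp only [dotProduct_smul, one_dotProduct, mulVec, dotProduct_one, smul_eq_mul]
    _ = Fintype.card n := by rw [inv_mulVec, one_dotProduct_one]

end Matrices

theorem card_edge (m : ℕ) : Fintype.card (Edge m) = m.choose 2 :=
  Sym2.card_subtype_not_diag.trans (by rw [Fintype.card_fin])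

theorem edge_mem_edgeSet_top {m : ℕ} (e : Edge m) : e.val ∈ (⊤ : SimpleGraph (Fin m)).edgeSet := by
  rw [SimpleGraph.edgeSet_top]
  exact e.property

theorem sum_edge_eq_sum_sym2 {m : ℕ} {A : Type*} [AddCommMonoid A] (f : Sym2 (Fin m) → A)
    (hf : ∀ e, e.IsDiag → f e = 0) : ∑ e : Edge m, f e.val = ∑ e, f e :=
  Fintype.sum_of_injective Subtype.val Subtype.val_injective _ _
    (fun e he => hf e (by simpa using he)) fun _ => rfl

theorem incMatrix_apply_of_isDiag {V R : Type*} [DecidableEq V] [MulZeroOneClass R]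
    (G : SimpleGraph V) [DecidableRel G.Adj] (v : V) {e : Sym2 V} (he : e.IsDiag) :
    G.incMatrix R v e = 0 :=
  G.incMatrix_of_notMem_incidenceSet fun h => G.not_isDiag_of_mem_edgeSet h.1 he

theorem incMatrix_top_mul_transpose {V R : Type*} [Fintype V] [DecidableEq V] [Ring R] :
    (⊤ : SimpleGraph V).incMatrix R * ((⊤ : SimpleGraph V).incMatrix R)ᵀ =
      ((Fintype.card V : R) - 2) • 1 + vecMulVec 1 1 := by
  rw [SimpleGraph.incMatrix_mul_transpose]
  ext v w
  obtain rfl | h := eq_or_ne v w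
  · have one_le_card : 1 ≤ Fintype.card V := Fintype.card_pos_iff.mpr ⟨v⟩
    simp only [of_apply, if_true, SimpleGraph.complete_graph_degree, Nat.cast_sub one_le_card,
      Matrix.add_apply, Matrix.smul_apply, one_apply_eq, vecMulVec_apply, Pi.one_apply, smul_eq_mul,
      mul_one, Nat.cast_one]
    rw [← one_add_one_eq_two]
    abel
  · simp [h]

section CompleteGraph

variable (k : ℕ)

theorem bmat_apply_eq_incMatrix (v : Fin (k + 1)) (e : Edge (k + 1)) :
    Bmat k v e = (⊤ : SimpleGraph (Fin (k + 1))).incMatrix ℚ v e.val := by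
  simp only [Bmat, of_apply, SimpleGraph.incMatrix_apply', SimpleGraph.incidenceSet,
    Set.mem_ofPred_eq, edge_mem_edgeSet_top, true_and]

theorem bmat_mulVec_one : Bmat k *ᵥ 1 = (k : ℚ) • 1 := by
  ext v
  simp only [mulVec, dotProduct_one, bmat_apply_eq_incMatrix]
  rw [sum_edge_eq_sum_sym2 _ fun _ he => incMatrix_apply_of_isDiag _ v he,
    SimpleGraph.sum_incMatrix_apply]
  simp

theorem transpose_bmat_mulVec_one : (Bmat k)ᵀ *ᵥ 1 = (2 : ℚ) • 1 := by
  ext e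
  simp only [mulVec, dotProduct_one, transpose_apply, bmat_apply_eq_incMatrix]
  rw [SimpleGraph.sum_incMatrix_apply_of_mem_edgeSet _ (edge_mem_edgeSet_top e)]
  simp

theorem bmat_mul_transpose : Bmat k * (Bmat k)ᵀ = ((k : ℚ) - 1) • 1 + vecMulVec 1 1 := by
  set B := (⊤ : SimpleGraph (Fin (k + 1))).incMatrix ℚ
  have eq_incMatrix : Bmat k * (Bmat k)ᵀ = B * Bᵀ := by
    ext v w
    simp only [mul_apply, transpose_apply, bmat_apply_eq_incMatrix]
    exact sum_edge_eq_sum_sym2 (fun e => B v e * B w e)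
      fun e he => mul_eq_zero_of_left (incMatrix_apply_of_isDiag _ v he) _
  rw [eq_incMatrix, incMatrix_top_mul_transpose, Fintype.card_fin]
  congr 2
  push_cast
  ring

theorem det_smul_one_sub_bmat_mul_transpose :
    ((k : ℚ) • 1 - Bmat k * (Bmat k)ᵀ).det = -(k : ℚ) := by
  have eq_one_sub : (k : ℚ) • 1 - Bmat k * (Bmat k)ᵀ = 1 - vecMulVec 1 1 := by
    rw [bmat_mul_transpose]
    module
  rw [eq_one_sub, det_one_sub_vecMulVec, one_dotProduct_one, Fintype.card_fin]
  push_cast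
  ring

theorem mmat_eq_smul_one_sub : Mmat k = (k : ℚ) • 1 - (Bmat k)ᵀ * Bmat k := by
  rw [Mmat, Lmat]
  module

theorem mmat_mulVec_one : Mmat k *ᵥ 1 = (-k : ℚ) • 1 := by
  rw [mmat_eq_smul_one_sub, sub_mulVec, smul_mulVec, one_mulVec, ← mulVec_mulVec, bmat_mulVec_one,
    mulVec_smul, transpose_bmat_mulVec_one]
  module

variable {k}

theorem det_mmat (hk : k ≠ 0) : (Mmat k).det = -(k : ℚ) ^ k.choose 2 := by
  have card_add_one : (k + 1).choose 2 + 1 = (k + 1) + k.choose 2 := by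
    rw [Nat.choose_succ_succ' k 1, Nat.choose_one_right]
    ring
  have pow_succ_ne_zero : (k : ℚ) ^ (k + 1) ≠ 0 := pow_ne_zero _ (Nat.cast_ne_zero.mpr hk)
  refine mul_left_cancel₀ pow_succ_ne_zero ?_
  calc (k : ℚ) ^ (k + 1) * (Mmat k).det
      = (k : ℚ) ^ (k + 1).choose 2 * ((k : ℚ) • 1 - Bmat k * (Bmat k)ᵀ).det := by
        rw [mmat_eq_smul_one_sub, ← card_edge, ← pow_card_mul_det_smul_one_sub_mul_comm,
          Fintype.card_fin]
    _ = -(k : ℚ) ^ ((k + 1).choose 2 + 1) := by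
        rw [det_smul_one_sub_bmat_mul_transpose, pow_succ, mul_neg]
    _ = (k : ℚ) ^ (k + 1) * -(k : ℚ) ^ k.choose 2 := by
        rw [card_add_one, pow_add, mul_neg]

theorem sum_inv_mmat (hk : k ≠ 0) : ∑ i, ∑ j, (Mmat k)⁻¹ i j = -((k : ℚ) + 1) / 2 := by
  have hk' : (k : ℚ) ≠ 0 := Nat.cast_ne_zero.mpr hk
  have isUnit_det : IsUnit (Mmat k).det := by
    rw [det_mmat hk]
    exact (neg_ne_zero.mpr (pow_ne_zero _ hk')).isUnit
  refine mul_left_cancel₀ (neg_ne_zero.mpr hk') ?_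
  rw [mul_sum_inv_of_mulVec_one isUnit_det (mmat_mulVec_one k), card_edge, Nat.cast_choose_two]
  push_cast
  ring

end CompleteGraph

/-- With `M = (k-2)·I - L` and `j_E` the all-ones vector, one has
`(j_Eᵀ·M⁻¹·j_E) · det M = (k+1)·k^{k(k-1)/2} / 2`. -/
theorem grand_sum_inverse_mul_det_M (k : ℕ) (hk : 1 ≤ k) :
    (∑ i, ∑ j, (Mmat k)⁻¹ i j) * (Mmat k).det =
      ((k : ℚ) + 1) * (k : ℚ) ^ (k * (k - 1) / 2) / 2 := by
  have hk₀ : k ≠ 0 := Nat.one_le_iff_ne_zero.mp hk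
  rw [sum_inv_mmat hk₀, det_mmat hk₀, Nat.choose_two_right]
  ring

end ChordBubbles
end
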